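/- Let φ be a nonzero weak Jacobi form of weight −2 and index 1 and ψ a nonzero weak Jacobi form of weight 0 and index 1 in the sense of Eichler–Zagier (i.e., W(A_1)-invariant weak Jacobi forms associated to the lattice A_1). Then the Jacobian J(φ,ψ) = φ·∂ψ/∂z − ψ·∂φ/∂z is not identically zero, and it equals c·ϑ(τ,2z)/η(τ)³ for some nonzero constant c. -/

import Mathlib

open Complex Matrix

noncomputable section

/-- The ℂ-bilinear pairing on `ℂ^l` induced by an integral Gram matrix `M`. -/
def pairC {l : ℕ} (M : Matrix (Fin l) (Fin l) ℤ) (v w : Fin l → ℂ) : ℂ :=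
  ∑ i, ∑ j, v i * (M i j : ℂ) * w j

/-- The ℚ-bilinear pairing on `ℚ^l` induced by an integral Gram matrix `M`. -/
def pairQ {l : ℕ} (M : Matrix (Fin l) (Fin l) ℤ) (v w : Fin l → ℚ) : ℚ :=
  ∑ i, ∑ j, v i * (M i j : ℚ) * w j

def zc {l : ℕ} (x : Fin l → ℤ) : Fin l → ℂ := fun i => (x i : ℂ)
def qc {l : ℕ} (x : Fin l → ℚ) : Fin l → ℂ := fun i => (x i : ℂ)

/-- `M` is the Gram matrix of an even positive definite lattice. -/
structure IsEvenPosDef {l : ℕ} (M : Matrix (Fin l) (Fin l) ℤ) : Prop where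
  symm : M.IsSymm
  even_diag : ∀ i, Even (M i i)
  posDef : (M.map (Int.cast : ℤ → ℝ)).PosDef

/-- `G` is a subgroup of the integral orthogonal group `O(L)` of the lattice with
Gram matrix `M`. -/
structure IsOrthSubgroup {l : ℕ} (M : Matrix (Fin l) (Fin l) ℤ)
    (G : Set (Matrix (Fin l) (Fin l) ℤ)) : Prop where
  one_mem : 1 ∈ G
  mul_mem : ∀ σ₁ ∈ G, ∀ σ₂ ∈ G, σ₁ * σ₂ ∈ G
  inv_mem : ∀ σ ∈ G, ∃ σ' ∈ G, σ * σ' = 1 ∧ σ' * σ = 1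
  isometry : ∀ σ ∈ G, σᵀ * M * σ = M

/-- `ℓ ∈ L^*`, the dual lattice. -/
def InDual {l : ℕ} (M : Matrix (Fin l) (Fin l) ℤ) (ℓ : Fin l → ℚ) : Prop :=
  ∀ x : Fin l → ℤ, ∃ n : ℤ, pairQ M ℓ (fun i => (x i : ℚ)) = n

/-- `c` is a family of Fourier coefficients, supported on `n ≥ 0` and `ℓ ∈ L^*`,
whose associated Fourier series converges to `φ` on `ℍ × (L ⊗ ℂ)`. -/
def FourierRep {l : ℕ} (M : Matrix (Fin l) (Fin l) ℤ) (φ : ℂ → (Fin l → ℂ) → ℂ)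
    (c : ℕ → (Fin l → ℚ) → ℂ) : Prop :=
  (∀ n ℓ, c n ℓ ≠ 0 → InDual M ℓ) ∧
  ∀ τ : ℂ, 0 < τ.im → ∀ z : Fin l → ℂ,
    HasSum (fun p : ℕ × (Fin l → ℚ) =>
      c p.1 p.2 * Complex.exp (2 * (Real.pi : ℂ) * Complex.I *
        ((p.1 : ℂ) * τ + pairC M (qc p.2) z))) (φ τ z)

/-- `φ` is a weak Jacobi form of weight `k` and index `t` associated to the even
positive definite lattice with Gram matrix `M`. -/
def IsWeakJacobiForm {l : ℕ} (M : Matrix (Fin l) (Fin l) ℤ) (k : ℤ) (t : ℕ)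
    (φ : ℂ → (Fin l → ℂ) → ℂ) : Prop :=
  (DifferentiableOn ℂ (fun p : ℂ × (Fin l → ℂ) => φ p.1 p.2)
    ({τ : ℂ | 0 < τ.im} ×ˢ (Set.univ : Set (Fin l → ℂ)))) ∧
  (∀ a b c d : ℤ, a * d - b * c = 1 → ∀ τ : ℂ, 0 < τ.im → ∀ z : Fin l → ℂ,
    φ (((a : ℂ) * τ + (b : ℂ)) / ((c : ℂ) * τ + (d : ℂ)))
        (fun i => z i / ((c : ℂ) * τ + (d : ℂ))) =
      ((c : ℂ) * τ + (d : ℂ)) ^ k *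
        Complex.exp ((t : ℂ) * (Real.pi : ℂ) * Complex.I * (c : ℂ) *
          pairC M z z / ((c : ℂ) * τ + (d : ℂ))) * φ τ z) ∧
  (∀ x y : Fin l → ℤ, ∀ τ : ℂ, 0 < τ.im → ∀ z : Fin l → ℂ,
    φ τ (fun i => z i + (x i : ℂ) * τ + (y i : ℂ)) =
      Complex.exp (-(t : ℂ) * (Real.pi : ℂ) * Complex.I *
        (pairC M (zc x) (zc x) * τ + 2 * pairC M (zc x) z)) * φ τ z) ∧
  (∃ c : ℕ → (Fin l → ℚ) → ℂ, FourierRep M φ c)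

/-- `φ` is invariant under the action of `G` on the lattice variable. -/
def GInvariant {l : ℕ} (G : Set (Matrix (Fin l) (Fin l) ℤ))
    (φ : ℂ → (Fin l → ℂ) → ℂ) : Prop :=
  ∀ σ ∈ G, ∀ τ : ℂ, 0 < τ.im → ∀ z : Fin l → ℂ,
    φ τ ((σ.map (Int.cast : ℤ → ℂ)).mulVec z) = φ τ z

/-- The partial derivative of `φ(τ, 𝔷)` in the `i`-th coordinate of the lattice
variable `𝔷`. -/
def pderiv' {l : ℕ} (i : Fin l) (φ : ℂ → (Fin l → ℂ) → ℂ) (τ : ℂ) (z : Fin l → ℂ) : ℂ :=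
  deriv (fun w : ℂ => φ τ (Function.update z i w)) (z i)

/-- The Jacobian `J(φ_1, ..., φ_{l+1})` of `l+1` Jacobi forms of indices `m j`:
the determinant of the matrix whose first row is `(m_j φ_j)_j` and whose later
rows are the partial derivatives `∂φ_j/∂z_i`. -/
def jacJacobian {l : ℕ} (m : Fin (l + 1) → ℕ) (φ : Fin (l + 1) → ℂ → (Fin l → ℂ) → ℂ)
    (τ : ℂ) (z : Fin l → ℂ) : ℂ :=
  Matrix.det (Matrix.of fun i j : Fin (l + 1) =>
    Fin.cases ((m j : ℂ) * φ j τ z) (fun i' : Fin l => pderiv' i' (φ j) τ z) i)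

/-- `f` is a (holomorphic) modular form of weight `k` on `SL₂(ℤ)`, viewed as a
holomorphic function on the upper half-plane with a Fourier expansion supported
on `n ≥ 0`. -/
def IsModularForm (k : ℤ) (f : ℂ → ℂ) : Prop :=
  DifferentiableOn ℂ f {τ : ℂ | 0 < τ.im} ∧
  (∀ a b c d : ℤ, a * d - b * c = 1 → ∀ τ : ℂ, 0 < τ.im →
    f (((a : ℂ) * τ + (b : ℂ)) / ((c : ℂ) * τ + (d : ℂ))) =
      ((c : ℂ) * τ + (d : ℂ)) ^ k * f τ) ∧
  ∃ cf : ℕ → ℂ, ∀ τ : ℂ, 0 < τ.im →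
    HasSum (fun n : ℕ => cf n * Complex.exp (2 * (Real.pi : ℂ) * Complex.I * (n : ℂ) * τ))
      (f τ)

/-- `φ` is not identically zero on `ℍ × (L ⊗ ℂ)`. -/
def NotIdenticallyZero {l : ℕ} (φ : ℂ → (Fin l → ℂ) → ℂ) : Prop :=
  ∃ τ z, 0 < τ.im ∧ φ τ z ≠ 0

/-- `r` is a primitive lattice vector. -/
def PrimitiveVec {l : ℕ} (r : Fin l → ℤ) : Prop :=
  r ≠ 0 ∧ ∀ (n : ℤ) (s : Fin l → ℤ), r = n • s → IsUnit n

/-- The reflection `σ_r : v ↦ v - ⟨r^∨, v⟩ r` belongs to `G`. -/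
def ReflectionIn {l : ℕ} (M : Matrix (Fin l) (Fin l) ℤ)
    (G : Set (Matrix (Fin l) (Fin l) ℤ)) (r : Fin l → ℤ) : Prop :=
  ∃ S ∈ G, ∀ v : Fin l → ℂ,
    (S.map (Int.cast : ℤ → ℂ)).mulVec v =
      fun i => v i - 2 * pairC M (zc r) v / pairC M (zc r) (zc r) * (r i : ℂ)

/-- `(τ, z)` belongs to `D_r(τ)`, i.e. `⟨r^∨, z⟩ ∈ ℤτ ⊕ ℤ`. -/
def OnMirror {l : ℕ} (M : Matrix (Fin l) (Fin l) ℤ) (r : Fin l → ℤ) (τ : ℂ)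
    (z : Fin l → ℂ) : Prop :=
  ∃ a b : ℤ, 2 * pairC M (zc r) z / pairC M (zc r) (zc r) = (a : ℂ) * τ + (b : ℂ)

/-- `J` vanishes precisely, and with multiplicity one, on the sets `D_r(τ)` for
primitive `r ∈ L` whose reflection lies in `G`. -/
def VanishesOrderOneOnMirrors {l : ℕ} (M : Matrix (Fin l) (Fin l) ℤ)
    (G : Set (Matrix (Fin l) (Fin l) ℤ)) (J : ℂ → (Fin l → ℂ) → ℂ) : Prop :=
  ∀ τ : ℂ, 0 < τ.im → ∀ z : Fin l → ℂ,
    ((J τ z = 0) ↔ ∃ r, PrimitiveVec r ∧ ReflectionIn M G r ∧ OnMirror M r τ z) ∧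
    (∀ r, PrimitiveVec r → ReflectionIn M G r → OnMirror M r τ z →
      (∀ r', PrimitiveVec r' → ReflectionIn M G r' → OnMirror M r' τ z →
        r' = r ∨ r' = -r) →
      deriv (fun w : ℂ => J τ (fun i => z i + w * (r i : ℂ))) 0 ≠ 0)

/-- The Fourier expansion of `φ` has a non-zero coefficient of type `f(0, ℓ)`. -/
def HasNonzeroQZeroTerm {l : ℕ} (M : Matrix (Fin l) (Fin l) ℤ)
    (φ : ℂ → (Fin l → ℂ) → ℂ) : Prop :=
  ∃ c : ℕ → (Fin l → ℚ) → ℂ, FourierRep M φ c ∧ ∃ ℓ, c 0 ℓ ≠ 0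

/-- `ψ = P(φ_1, ..., φ_n)` where `P` is a polynomial with coefficients which are
modular forms on `SL₂(ℤ)`, graded so that each monomial has weight `k` and index `t`. -/
def MPolyRep {l n : ℕ} (kj : Fin n → ℤ) (mj : Fin n → ℕ)
    (φ : Fin n → ℂ → (Fin l → ℂ) → ℂ) (k : ℤ) (t : ℕ)
    (c : (Fin n → ℕ) → ℂ → ℂ) (ψ : ℂ → (Fin l → ℂ) → ℂ) : Prop :=
  {d : Fin n → ℕ | c d ≠ 0}.Finite ∧
  (∀ d : Fin n → ℕ, c d ≠ 0 →
    (∑ j, d j * mj j) = t ∧ IsModularForm (k - ∑ j, (d j : ℤ) * kj j) (c d)) ∧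
  (∀ τ : ℂ, 0 < τ.im → ∀ z : Fin l → ℂ,
    ψ τ z = ∑ᶠ d : Fin n → ℕ, c d τ * ∏ j, (φ j τ z) ^ (d j))

/-- The forms `φ_1, ..., φ_n` are algebraically independent over the graded ring
`M_*(SL₂(ℤ))` of modular forms on `SL₂(ℤ)`. -/
def AlgIndepOverM {l n : ℕ} (φ : Fin n → ℂ → (Fin l → ℂ) → ℂ) : Prop :=
  ∀ c : (Fin n → ℕ) → ℂ → ℂ,
    {d : Fin n → ℕ | c d ≠ 0}.Finite →
    (∀ d, c d ≠ 0 → ∃ w : ℤ, IsModularForm w (c d)) →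
    (∀ τ : ℂ, 0 < τ.im → ∀ z : Fin l → ℂ,
      (∑ᶠ d : Fin n → ℕ, c d τ * ∏ j, (φ j τ z) ^ (d j)) = 0) →
    ∀ d τ, 0 < τ.im → c d τ = 0


/-- The Jacobi theta function
`ϑ(τ,z) = q^{1/8}(ζ^{1/2}-ζ^{-1/2}) ∏_{n≥1} (1-q^n ζ)(1-q^n ζ^{-1})(1-q^n)`. -/
def jtheta (τ z : ℂ) : ℂ :=
  Complex.exp ((Real.pi : ℂ) * Complex.I * τ / 4) *
    (Complex.exp ((Real.pi : ℂ) * Complex.I * z) -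
      Complex.exp (-((Real.pi : ℂ) * Complex.I * z))) *
    ∏' n : ℕ,
      ((1 - Complex.exp (2 * (Real.pi : ℂ) * Complex.I * ((n : ℂ) + 1) * τ) *
            Complex.exp (2 * (Real.pi : ℂ) * Complex.I * z)) *
       (1 - Complex.exp (2 * (Real.pi : ℂ) * Complex.I * ((n : ℂ) + 1) * τ) *
            Complex.exp (-(2 * (Real.pi : ℂ) * Complex.I * z))) *
       (1 - Complex.exp (2 * (Real.pi : ℂ) * Complex.I * ((n : ℂ) + 1) * τ)))

/-- The Dedekind eta function `η(τ) = q^{1/24} ∏_{n≥1} (1-q^n)`. -/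
def dedekindEta (τ : ℂ) : ℂ :=
  Complex.exp ((Real.pi : ℂ) * Complex.I * τ / 12) *
    ∏' n : ℕ, (1 - Complex.exp (2 * (Real.pi : ℂ) * Complex.I * ((n : ℂ) + 1) * τ))

/-- The Gram matrix of the lattice `A₁ = ⟨ℤ, 2x²⟩`. -/
def A1Gram : Matrix (Fin 1) (Fin 1) ℤ := !![2]


section ModPart
open UpperHalfPlane ModularForm ModularGroup MatrixGroups

/-- Bundle a function on the upper half plane as a level one modular form. -/
theorem exists_modularForm (k : ℤ) (f : ℂ → ℂ)
    (hd : DifferentiableOn ℂ f {τ : ℂ | 0 < τ.im})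
    (hm : ∀ a b c d : ℤ, a * d - b * c = 1 → ∀ τ : ℂ, 0 < τ.im →
      f (((a : ℂ) * τ + (b : ℂ)) / ((c : ℂ) * τ + (d : ℂ))) =
      ((c : ℂ) * τ + (d : ℂ)) ^ k * f τ)
    (hb : ∃ C : ℝ, ∀ τ : ℂ, 1 ≤ τ.im → ‖f τ‖ ≤ C) :
    ∃ F : ModularForm 𝒮ℒ k, ∀ τ : ℍ, F τ = f τ := by
  have hsl : ∀ γ : SL(2, ℤ), ((fun τ : ℍ => f τ) ∣[k] γ) = fun τ : ℍ => f τ := by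
    intro γ
    ext τ
    rw [ModularForm.SL_slash_apply]
    have hdet := γ.det_coe
    rw [Matrix.det_fin_two] at hdet
    have h := hm (γ 0 0) (γ 0 1) (γ 1 0) (γ 1 1) hdet τ τ.im_pos
    have h0 : UpperHalfPlane.denom γ τ ≠ 0 := UpperHalfPlane.denom_ne_zero _ _
    have e1 : ((γ • τ : ℍ) : ℂ) = ((γ 0 0 : ℂ) * τ + (γ 0 1 : ℂ)) / ((γ 1 0 : ℂ) * τ + (γ 1 1 : ℂ)) := by
      rw [UpperHalfPlane.specialLinearGroup_apply]
      simp
    have e2 : UpperHalfPlane.denom γ τ = (γ 1 0 : ℂ) * τ + (γ 1 1 : ℂ) := by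
      simp [UpperHalfPlane.denom]
    rw [e1, h, e2]
    rw [e2] at h0
    rw [mul_assoc, mul_comm (f τ), ← mul_assoc, ← zpow_add₀ h0]
    simp
  refine ⟨{ toFun := fun τ : ℍ => f τ, slash_action_eq' := ?_, holo' := ?_, bdd_at_cusps' := ?_ },
    fun τ => rfl⟩
  · rintro γ ⟨g, rfl⟩
    exact hsl g
  · rw [UpperHalfPlane.mdifferentiable_iff]
    refine hd.congr ?_
    intro x hx
    simp [UpperHalfPlane.ofComplex_apply_of_im_pos hx]
  · intro c hc
    rw [OnePoint.isBoundedAt_iff_forall_SL2Z hc]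
    intro γ _
    have := hsl γ
    change IsBoundedAtImInfty ((fun τ : ℍ => f τ) ∣[k] γ)
    rw [this, isBoundedAtImInfty_iff]
    obtain ⟨C, hC⟩ := hb
    exact ⟨C, 1, fun z hz => hC z hz⟩

theorem mod_neg_two (f : ℂ → ℂ) (hd : DifferentiableOn ℂ f {τ : ℂ | 0 < τ.im})
    (hb : ∃ C : ℝ, ∀ τ : ℂ, 1 ≤ τ.im → ‖f τ‖ ≤ C)
    (hm : ∀ a b c d : ℤ, a * d - b * c = 1 → ∀ τ : ℂ, 0 < τ.im →
      f (((a : ℂ) * τ + (b : ℂ)) / ((c : ℂ) * τ + (d : ℂ))) =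
      ((c : ℂ) * τ + (d : ℂ)) ^ (-2 : ℤ) * f τ) :
    ∀ τ : ℂ, 0 < τ.im → f τ = 0 := by
  obtain ⟨F, hF⟩ := exists_modularForm (-2) f hd hm hb
  intro τ hτ
  have := ModularFormClass.levelOne_neg_weight_eq_zero (k := -2) (by norm_num) F
  rw [← hF ⟨τ, hτ⟩, this]; rfl

theorem mod_two (f : ℂ → ℂ) (hd : DifferentiableOn ℂ f {τ : ℂ | 0 < τ.im})
    (hb : ∃ C : ℝ, ∀ τ : ℂ, 1 ≤ τ.im → ‖f τ‖ ≤ C)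
    (hm : ∀ a b c d : ℤ, a * d - b * c = 1 → ∀ τ : ℂ, 0 < τ.im →
      f (((a : ℂ) * τ + (b : ℂ)) / ((c : ℂ) * τ + (d : ℂ))) =
      ((c : ℂ) * τ + (d : ℂ)) ^ (2 : ℤ) * f τ) :
    ∀ τ : ℂ, 0 < τ.im → f τ = 0 := by
  obtain ⟨F, hF⟩ := exists_modularForm 2 f hd hm hb
  intro τ hτ
  have := rank_zero_iff_forall_zero.mp ModularForm.levelOne_weight_two_rank_zero F
  rw [← hF ⟨τ, hτ⟩, this]; rfl

theorem mod_zero (f : ℂ → ℂ) (hd : DifferentiableOn ℂ f {τ : ℂ | 0 < τ.im})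
    (hb : ∃ C : ℝ, ∀ τ : ℂ, 1 ≤ τ.im → ‖f τ‖ ≤ C)
    (hm : ∀ a b c d : ℤ, a * d - b * c = 1 → ∀ τ : ℂ, 0 < τ.im →
      f (((a : ℂ) * τ + (b : ℂ)) / ((c : ℂ) * τ + (d : ℂ))) =
      ((c : ℂ) * τ + (d : ℂ)) ^ (0 : ℤ) * f τ) :
    ∃ C : ℂ, ∀ τ : ℂ, 0 < τ.im → f τ = C := by
  obtain ⟨F, hF⟩ := exists_modularForm 0 f hd hm hb
  obtain ⟨C, hC⟩ := ModularFormClass.levelOne_weight_zero_const F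
  refine ⟨C, fun τ hτ => ?_⟩
  rw [← hF ⟨τ, hτ⟩, hC]; rfl

end ModPart

/-- Entire functions of elliptic type of index `t`. -/
def QP (t τ : ℂ) (f : ℂ → ℂ) : Prop :=
  Differentiable ℂ f ∧ (∀ z, f (z + 1) = f z) ∧
    ∀ z, f (z + τ) = cexp (-(2 * (Real.pi : ℂ) * I * t * (τ + 2 * z))) * f z

/-- Fourier coefficient in the lattice variable. -/
def fcf (f : ℂ → ℂ) (n : ℤ) : ℂ :=
  ∫ x in (0 : ℝ)..1, f x * cexp (-(2 * (Real.pi : ℂ) * I * n * x))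

theorem shift_int (g : ℂ → ℂ) (hg : Differentiable ℂ g) (hp : ∀ z, g (z + 1) = g z) (τ : ℂ) :
    ∫ x in (0 : ℝ)..1, g (x + τ) = ∫ x in (0 : ℝ)..1, g x := by
  have h := Complex.integral_boundary_rect_eq_zero_of_differentiableOn g 0 (1 + τ.im * I)
    hg.differentiableOn
  have e : ∀ y : ℝ, g (1 + y * I) = g (y * I) := fun y => by rw [add_comm, hp]
  simp only [zero_re, zero_im, add_re, one_re, mul_re, ofReal_re, I_re, mul_zero, ofReal_im, I_im,
    mul_one, sub_self, add_zero, add_im, one_im, mul_im, zero_add, ofReal_zero, zero_mul,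
    ofReal_one, e] at h
  have h1 : ∫ x in (0 : ℝ)..1, g x = ∫ x in (0 : ℝ)..1, g (x + τ.im * I) := by
    linear_combination h
  rw [h1]
  have hper : Function.Periodic (fun x : ℝ => g (x + τ.im * I)) 1 := by
    intro x
    simp only
    rw [← hp (x + τ.im * I)]
    congr 1
    push_cast; ring
  have h2 := hper.intervalIntegral_add_eq τ.re 0
  rw [zero_add] at h2
  rw [← h2]
  have h3 := intervalIntegral.integral_comp_add_right (a := 0) (b := 1)
    (fun x : ℝ => g (x + τ.im * I)) τ.re
  rw [zero_add, add_comm 1 τ.re] at h3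
  rw [← h3]
  congr 1
  ext x
  congr 1
  conv_lhs => rw [← re_add_im τ]
  push_cast; ring

theorem fcf_rec {t : ℤ} {τ : ℂ} {f : ℂ → ℂ} (h : QP t τ f) (n : ℤ) :
    fcf f (n + 2 * t) = cexp (2 * (Real.pi : ℂ) * I * (n + t) * τ) * fcf f n := by
  obtain ⟨hd, hp, hq⟩ := h
  have h1 := shift_int (fun z => f z * cexp (-(2 * (Real.pi : ℂ) * I * n * z)))
    (by fun_prop) (by
      intro z
      simp only [hp]
      congr 1
      rw [exp_eq_exp_iff_exists_int]
      exact ⟨-n, by push_cast; ring⟩) τ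
  unfold fcf
  rw [← h1, ← intervalIntegral.integral_const_mul]
  congr 1
  ext x
  rw [hq]
  rw [mul_comm (cexp _) (f x), mul_assoc (f x), mul_left_comm, ← exp_add, ← exp_add]
  congr 2
  push_cast; ring

theorem eq_zero_of_fcf {f : ℂ → ℂ} (hd : Differentiable ℂ f) (hp : ∀ z, f (z + 1) = f z)
    (h : ∀ n, fcf f n = 0) : f = 0 := by
  have : Fact (0 < (1 : ℝ)) := ⟨one_pos⟩
  have hper : Function.Periodic (fun x : ℝ => f x) 1 := by
    intro x; simp only; push_cast; exact hp x
  have hcont : Continuous (fun x : ℝ => f x) := hd.continuous.comp continuous_ofReal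
  let F : C(AddCircle (1 : ℝ), ℂ) := ⟨hper.lift, continuous_coinduced_dom.mpr hcont⟩
  have hF : ∀ x : ℝ, F (x : AddCircle (1 : ℝ)) = f x := fun x => hper.lift_coe x
  have hc : ∀ n, fourierCoeff F n = 0 := by
    intro n
    rw [fourierCoeff_eq_intervalIntegral _ n 0, ← h n]
    simp only [div_one, one_smul, zero_add]
    unfold fcf
    congr 1
    ext x
    rw [hF, fourier_coe_apply, smul_eq_mul, mul_comm]
    congr 2
    push_cast; ring
  have hs : Summable (fourierCoeff F) := by
    have : fourierCoeff F = fun _ => 0 := funext hc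
    rw [this]; exact summable_zero
  have hR : ∀ x : ℝ, f x = 0 := by
    intro x
    have := has_pointwise_sum_fourier_series_of_summable hs (x : AddCircle (1 : ℝ))
    simp only [hc, zero_smul, hF] at this
    exact this.unique hasSum_zero
  have han : AnalyticOnNhd ℂ f Set.univ := fun z _ => hd.analyticAt z
  have h0 : AnalyticOnNhd ℂ (0 : ℂ → ℂ) Set.univ := fun z _ => analyticAt_const
  refine han.eq_of_frequently_eq (z₀ := 0) h0 ?_
  have hseq : Filter.Tendsto (fun n : ℕ => (((1 : ℝ) / ((n : ℝ) + 1) : ℝ) : ℂ)) Filter.atTop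
      (nhdsWithin 0 {0}ᶜ) := by
    rw [tendsto_nhdsWithin_iff]
    constructor
    · have := (continuous_ofReal.tendsto 0).comp (tendsto_one_div_add_atTop_nhds_zero_nat (𝕜 := ℝ))
      rw [ofReal_zero] at this
      exact this
    · filter_upwards with n
      simp only [Set.mem_compl_iff, Set.mem_singleton_iff, ofReal_eq_zero]
      positivity
  exact hseq.frequently (Filter.Frequently.of_forall fun n => hR _)

theorem fcf_neg {f : ℂ → ℂ} (hp : ∀ z, f (z + 1) = f z)
    (ho : ∀ z, f (-z) = -f z) (n : ℤ) : fcf f (-n) = - fcf f n := by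
  have hper : Function.Periodic (fun x : ℝ => f x * cexp (-(2 * (Real.pi : ℂ) * I * n * x))) 1 := by
    intro x
    simp only; push_cast; rw [hp]
    congr 1
    rw [exp_eq_exp_iff_exists_int]
    exact ⟨-n, by push_cast; ring⟩
  have h2 := hper.intervalIntegral_add_eq (-1) 0
  have h3 := intervalIntegral.integral_comp_neg (a := 0) (b := 1)
    (fun x : ℝ => f x * cexp (-(2 * (Real.pi : ℂ) * I * n * x)))
  simp only [neg_zero, neg_add_cancel, zero_add] at h2 h3
  unfold fcf
  rw [← h2, ← h3, ← intervalIntegral.integral_neg]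
  congr 1
  ext x
  push_cast
  rw [ho, neg_mul, neg_neg]
  congr 2
  ring

theorem odd_eq_zero {τ : ℂ} {f : ℂ → ℂ} (h : QP (2 : ℤ) τ f)
    (ho : ∀ z, f (-z) = -f z) (h1 : fcf f 1 = 0) : f = 0 := by
  have hr : ∀ n, fcf f (n + 4) = 0 ↔ fcf f n = 0 := by
    intro n
    have := fcf_rec h n
    norm_num at this
    rw [this]
    simp
  have h0 : fcf f 0 = 0 := by
    have := fcf_neg h.2.1 ho 0
    simp only [neg_zero] at this
    exact self_eq_neg.mp this
  have hm1 : fcf f (-1) = 0 := by rw [fcf_neg h.2.1 ho, h1, neg_zero]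
  have h2 : fcf f 2 = 0 := by
    have a := fcf_rec h (-2)
    have b := fcf_neg h.2.1 ho 2
    norm_num at a
    rw [b] at a
    exact self_eq_neg.mp a
  have h3 : fcf f 3 = 0 := by
    have := (hr (-1)).mpr hm1
    norm_num at this
    exact this
  have key : ∀ k : ℤ, ∀ r, fcf f r = 0 → fcf f (r + 4 * k) = 0 := by
    intro k r hr0
    induction k using Int.induction_on with
    | zero => simpa using hr0
    | succ i ih =>
      have := (hr (r + 4 * i)).mpr ih
      rwa [show r + 4 * ((i : ℤ) + 1) = r + 4 * i + 4 by ring]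
    | pred i ih =>
      apply (hr _).mp
      rwa [show r + 4 * (-(i : ℤ) - 1) + 4 = r + 4 * (-i) by ring]
  apply eq_zero_of_fcf h.1 h.2.1
  intro n
  have hn : n = n % 4 + 4 * (n / 4) := (Int.emod_add_mul_ediv n 4).symm
  rw [hn]
  apply key
  have : n % 4 = 0 ∨ n % 4 = 1 ∨ n % 4 = 2 ∨ n % 4 = 3 := by omega
  rcases this with h | h | h | h <;> rw [h] <;> assumption

theorem fcf_lin {f g : ℂ → ℂ} (hf : Differentiable ℂ f) (hg : Differentiable ℂ g) (a b : ℂ) (n : ℤ) :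
    fcf (fun z => a * f z - b * g z) n = a * fcf f n - b * fcf g n := by
  unfold fcf
  have hfc := hf.continuous
  have hgc := hg.continuous
  rw [← intervalIntegral.integral_const_mul, ← intervalIntegral.integral_const_mul,
    ← intervalIntegral.integral_sub]
  · congr 1; ext x; ring
  · exact Continuous.intervalIntegrable (by fun_prop) _ _
  · exact Continuous.intervalIntegrable (by fun_prop) _ _

theorem QP.lin {t τ : ℂ} {f g : ℂ → ℂ} (hf : QP t τ f) (hg : QP t τ g) (a b : ℂ) :
    QP t τ (fun z => a * f z - b * g z) := by
  refine ⟨?_, ?_, ?_⟩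
  · exact (hf.1.const_mul a).sub (hg.1.const_mul b)
  · intro z; simp only [hf.2.1, hg.2.1]
  · intro z; simp only [hf.2.2, hg.2.2]; ring

/-- An odd function of index 2 with vanishing derivative at the origin is zero, given one
such function with nonvanishing derivative. -/
theorem odd_eq_zero' {τ : ℂ} {f T : ℂ → ℂ} (h : QP (2 : ℤ) τ f) (hT : QP (2 : ℤ) τ T)
    (ho : ∀ z, f (-z) = -f z) (hTo : ∀ z, T (-z) = -T z)
    (hT' : deriv T 0 ≠ 0) (h1 : deriv f 0 = 0) : f = 0 := by
  have hlin := QP.lin hT h (fcf f 1) (fcf T 1)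
  have hz := odd_eq_zero hlin (by intro z; simp only [ho, hTo]; ring)
    (by rw [fcf_lin hT.1 h.1]; ring)
  have hd : deriv (fun z => fcf f 1 * T z - fcf T 1 * f z) 0 = 0 := by
    rw [hz]; simp
  have hd2 : deriv (fun z => fcf f 1 * T z - fcf T 1 * f z) 0 =
      fcf f 1 * deriv T 0 - fcf T 1 * deriv f 0 :=
    (((hT.1 0).hasDerivAt.const_mul _).sub ((h.1 0).hasDerivAt.const_mul _)).deriv
  rw [hd2, h1, mul_zero, sub_zero] at hd
  exact odd_eq_zero h ho ((mul_eq_zero.mp hd).resolve_right hT')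

/-- The Wronskian of two index one functions has index two. -/
theorem QP.wronskian {τ : ℂ} {f g : ℂ → ℂ} (hf : QP (1 : ℤ) τ f) (hg : QP (1 : ℤ) τ g) :
    QP (2 : ℤ) τ (fun z => f z * deriv g z - g z * deriv f z) := by
  have hder : ∀ {f : ℂ → ℂ}, QP (1 : ℤ) τ f → (∀ z, deriv f (z + 1) = deriv f z) ∧
      ∀ z, deriv f (z + τ) = cexp (-(2 * (Real.pi : ℂ) * I * (1 : ℤ) * (τ + 2 * z))) * deriv f z
        - 4 * (Real.pi : ℂ) * I * cexp (-(2 * (Real.pi : ℂ) * I * (1 : ℤ) * (τ + 2 * z))) * f z := by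
    intro f hf
    constructor
    · intro z
      rw [← deriv_comp_add_const]
      simp only [hf.2.1]
    · intro z
      rw [← deriv_comp_add_const]
      simp only [hf.2.2]
      have h1 : HasDerivAt (fun z => -(2 * (Real.pi : ℂ) * I * (1 : ℤ) * (τ + 2 * z)))
          (-(2 * (Real.pi : ℂ) * I * (1 : ℤ) * (2 * 1))) z :=
        ((((hasDerivAt_id z).const_mul 2).const_add τ).const_mul _).neg
      rw [(h1.cexp.fun_mul (hf.1 z).hasDerivAt).deriv]
      push_cast; ring
  refine ⟨?_, ?_, ?_⟩
  · have h1 : Differentiable ℂ (deriv f) := (hf.1.contDiff (n := 2)).differentiable_deriv_two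
    have h2 : Differentiable ℂ (deriv g) := (hg.1.contDiff (n := 2)).differentiable_deriv_two
    exact (hf.1.mul h2).sub (hg.1.mul h1)
  · intro z
    simp only [hf.2.1, hg.2.1, (hder hf).1, (hder hg).1]
  · intro z
    simp only [hf.2.2, hg.2.2, (hder hf).2, (hder hg).2]
    rw [show -(2 * (Real.pi : ℂ) * I * (2 : ℤ) * (τ + 2 * z)) =
      -(2 * (Real.pi : ℂ) * I * (1 : ℤ) * (τ + 2 * z)) + -(2 * (Real.pi : ℂ) * I * (1 : ℤ) * (τ + 2 * z))
      by push_cast; ring, exp_add]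
    ring

theorem deriv_odd_of_even {f : ℂ → ℂ} (he : ∀ z, f (-z) = f z) (z : ℂ) :
    deriv f (-z) = - deriv f z := by
  have := deriv_comp_neg f z
  simp only [he] at this
  rw [this, neg_neg]

theorem deriv_wronskian {f g : ℂ → ℂ} (hf : Differentiable ℂ f) (hg : Differentiable ℂ g) (z : ℂ) :
    deriv (fun z => f z * deriv g z - g z * deriv f z) z =
      f z * deriv (deriv g) z - g z * deriv (deriv f) z := by
  have h1 : Differentiable ℂ (deriv f) := (hf.contDiff (n := 2)).differentiable_deriv_two
  have h2 : Differentiable ℂ (deriv g) := (hg.contDiff (n := 2)).differentiable_deriv_two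
  rw [(((hf z).hasDerivAt.fun_mul (h2 z).hasDerivAt).fun_sub ((hg z).hasDerivAt.fun_mul (h1 z).hasDerivAt)).deriv]
  ring

/-- Vanishing Wronskian implies proportionality. -/
theorem prop_of_wronskian {f g : ℂ → ℂ} (hf : Differentiable ℂ f) (hg : Differentiable ℂ g)
    (hf0 : f ≠ 0) (hw : ∀ z, f z * deriv g z - g z * deriv f z = 0) :
    ∃ k : ℂ, ∀ z, g z = k * f z := by
  obtain ⟨z0, hz0⟩ : ∃ z, f z ≠ 0 := by
    by_contra hcon; push Not at hcon; exact hf0 (funext hcon)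
  refine ⟨g z0 / f z0, ?_⟩
  obtain ⟨r, hr, hball⟩ := Metric.eventually_nhds_iff_ball.mp
    (hf.continuous.continuousAt.eventually_ne hz0)
  have hconst : ∀ z ∈ Metric.ball z0 r, g z = g z0 / f z0 * f z := by
    intro z hz
    have hdd : ∀ w ∈ Metric.ball z0 r, HasDerivAt (fun w => g w / f w) 0 w := by
      intro w hw'
      have := (hg w).hasDerivAt.div (hf w).hasDerivAt (hball w hw')
      convert! this using 1
      rw [eq_comm, div_eq_zero_iff]
      left
      linear_combination hw w
    have := (convex_ball z0 r).is_const_of_fderivWithin_eq_zero (𝕜 := ℂ) (f := fun w => g w / f w)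
      (fun w hw' => (hdd w hw').differentiableAt.differentiableWithinAt)
      (fun w hw' => by
        rw [fderivWithin_of_isOpen Metric.isOpen_ball hw']
        ext
        simp [(hdd w hw').deriv]) hz (Metric.mem_ball_self hr)
    rw [← this]
    field_simp [hball z hz]
  have han : AnalyticOnNhd ℂ g Set.univ := fun z _ => hg.analyticAt z
  have h0 : AnalyticOnNhd ℂ (fun z => g z0 / f z0 * f z) Set.univ :=
    fun z _ => (hf.const_mul _).analyticAt z
  have := han.eq_of_eventuallyEq (z₀ := z0) h0
    (Filter.mem_of_superset (Metric.ball_mem_nhds z0 hr) hconst)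
  intro z
  exact congrFun this z

theorem deriv2_zero_of_wronskian {τ : ℂ} {f g T : ℂ → ℂ} (hf : QP (1 : ℤ) τ f) (hg : QP (1 : ℤ) τ g)
    (hfe : ∀ z, f (-z) = f z) (hge : ∀ z, g (-z) = g z) (hf0 : f ≠ 0)
    (hT : QP (2 : ℤ) τ T) (hTo : ∀ z, T (-z) = -T z) (hT' : deriv T 0 ≠ 0)
    (h0 : f 0 = 0) (h2 : deriv (deriv f) 0 = 0) : ∃ k : ℂ, ∀ z, g z = k * f z := by
  have hw := odd_eq_zero' (hf.wronskian hg) hT (by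
    intro z
    simp only [hfe, hge, deriv_odd_of_even hfe, deriv_odd_of_even hge]; ring) hTo hT'
    (by rw [deriv_wronskian hf.1 hg.1, h0, h2]; ring)
  exact prop_of_wronskian hf.1 hg.1 hf0 (fun z => congrFun hw z)

/-- An even function of index one vanishing to order four at the origin is zero. -/
theorem even_eq_zero {τ : ℂ} {f T : ℂ → ℂ} (hf : QP (1 : ℤ) τ f)
    (hfe : ∀ z, f (-z) = f z)
    (hT : QP (2 : ℤ) τ T) (hTo : ∀ z, T (-z) = -T z) (hT' : deriv T 0 ≠ 0)
    (h0 : f 0 = 0) (h2 : deriv (deriv f) 0 = 0) : f = 0 := by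
  by_contra hne
  have hd := hf.1
  obtain ⟨k, hk⟩ := deriv2_zero_of_wronskian (g := fun z => f (z + 1 / 2)) hf
    ⟨by fun_prop, fun z => by simp only; rw [← hf.2.1 (z + 1 / 2)]; congr 1; ring,
      fun z => by
        simp only
        rw [show z + τ + 1 / 2 = (z + 1 / 2) + τ by ring, hf.2.2]
        congr 1
        rw [exp_eq_exp_iff_exists_int]
        exact ⟨-1, by push_cast; ring⟩⟩ hfe
    (fun z => by
      rw [← hfe, ← hf.2.1]; congr 1; ring) hne hT hTo hT' h0 h2
  obtain ⟨l, hl⟩ := deriv2_zero_of_wronskian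
    (g := fun z => cexp (2 * (Real.pi : ℂ) * I * z) * f (z + τ / 2)) hf
    ⟨by fun_prop, fun z => by
        simp only
        rw [show z + 1 + τ / 2 = (z + τ / 2) + 1 by ring, hf.2.1]
        congr 1
        rw [exp_eq_exp_iff_exists_int]
        exact ⟨1, by push_cast; ring⟩,
      fun z => by
        simp only
        rw [show z + τ + τ / 2 = (z + τ / 2) + τ by ring, hf.2.2, ← mul_assoc, ← mul_assoc,
          ← exp_add, ← exp_add]
        congr 2
        push_cast; ring⟩ hfe
    (fun z => by
      rw [← hfe, show -(-z + τ / 2) = z - τ / 2 by ring, show z + τ / 2 = z - τ / 2 + τ by ring,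
        hf.2.2, ← mul_assoc, ← exp_add]
      congr 2
      push_cast; ring) hne hT hTo hT' h0 h2
  obtain ⟨z, hz⟩ : ∃ z, f z ≠ 0 := by
    by_contra hcon; push Not at hcon; exact hne (funext hcon)
  have e1 := hl (z + 1 / 2)
  rw [show z + 1 / 2 + τ / 2 = z + τ / 2 + 1 / 2 by ring, hk, hk,
    show 2 * (Real.pi : ℂ) * I * (z + 1 / 2) = 2 * (Real.pi : ℂ) * I * z + Real.pi * I by ring,
    exp_add, exp_pi_mul_I] at e1
  have e2 := hl z
  have e3 : k * l * f z = 0 := by linear_combination (-1 / 2 : ℂ) * e1 - k / 2 * e2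
  have hk0 : k ≠ 0 := by
    rintro rfl
    apply hz
    have := hk (z - 1 / 2)
    simpa using this
  have hl0 : l ≠ 0 := by
    rintro rfl
    apply hz
    have := hl (z - τ / 2)
    simpa using this
  simp [hk0, hl0, hz] at e3

/-- The product `∏ (1 - q^{n+1} x)`. -/
def AP (q x : ℂ) : ℂ := ∏' n : ℕ, (1 - q ^ (n + 1) * x)

theorem AP_mult {q : ℂ} (hq : ‖q‖ < 1) (x : ℂ) : Multipliable fun n : ℕ => 1 - q ^ (n + 1) * x := by
  simp_rw [sub_eq_add_neg]
  apply multipliable_one_add_of_summable (f := fun n ↦ -(q ^ (n + 1) * x))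
  simp only [norm_neg, norm_mul, norm_pow]
  exact ((summable_nat_add_iff 1).mpr
    (summable_geometric_of_lt_one (norm_nonneg _) hq)).mul_right _

theorem AP_rec {q : ℂ} (hq : ‖q‖ < 1) (x : ℂ) : AP q x = (1 - q * x) * AP q (q * x) := by
  unfold AP
  rw [tprod_eq_zero_mul']
  · simp only [zero_add, pow_one]
    congr 1
    apply tprod_congr
    intro n
    ring
  · refine (AP_mult hq (q * x)).congr ?_
    intro n
    ring

theorem AP_diff {q : ℂ} (hq : ‖q‖ < 1) : Differentiable ℂ (AP q) := by
  rw [← differentiableOn_univ]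
  have h : HasProdLocallyUniformlyOn (fun (n : ℕ) x ↦ 1 + -(q ^ (n + 1) * x))
      (fun x => ∏' n : ℕ, (1 + -(q ^ (n + 1) * x))) (Set.univ : Set ℂ) := by
    apply hasProdLocallyUniformlyOn_of_forall_compact isOpen_univ
    intro K _ hcK
    obtain ⟨C, hC⟩ := hcK.isBounded.exists_norm_le
    refine (((summable_nat_add_iff 1).mpr (summable_geometric_of_lt_one (norm_nonneg _)
      hq)).mul_right C).hasProdUniformlyOn_nat_one_add
      hcK (.of_forall fun n x hx ↦ ?_) (fun _ ↦ by fun_prop)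
    rw [norm_neg, norm_mul, norm_pow]
    exact mul_le_mul_of_nonneg_left (hC x hx) (by positivity)
  have := h.differentiableOn
    (.of_forall fun _ ↦ by simpa [Finset.prod_fn] using
      DifferentiableOn.finsetProd (fun _ _ ↦ by fun_prop)) isOpen_univ
  refine this.congr ?_
  intro x _
  simp [AP, sub_eq_add_neg]

theorem AP_one_ne {q : ℂ} (hq : ‖q‖ < 1) : AP q 1 ≠ 0 := by
  unfold AP
  simp_rw [sub_eq_add_neg]
  refine tprod_one_add_ne_zero_of_summable (f := fun n ↦ -(q ^ (n + 1) * 1)) ?_ ?_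
  · intro n h
    have h1 : q ^ (n + 1) = 1 := by linear_combination -h
    have h2 : ‖q‖ ^ (n + 1) = 1 := by rw [← norm_pow, h1, norm_one]
    have h3 : ‖q‖ ^ (n + 1) < 1 := pow_lt_one₀ (norm_nonneg _) hq (by omega)
    linarith
  · simp only [norm_neg, norm_pow, mul_one]
    exact ((summable_nat_add_iff 1).mpr (summable_geometric_of_lt_one (norm_nonneg _) hq))

theorem norm_q_lt {τ : ℂ} (hτ : 0 < τ.im) : ‖cexp (2 * (Real.pi : ℂ) * I * τ)‖ < 1 :=
  UpperHalfPlane.norm_exp_two_pi_I_lt_one ⟨τ, hτ⟩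

theorem q_pow (τ : ℂ) (n : ℕ) : cexp (2 * (Real.pi : ℂ) * I * ((n : ℂ) + 1) * τ) =
    cexp (2 * (Real.pi : ℂ) * I * τ) ^ (n + 1) := by
  rw [← exp_nat_mul]
  congr 1
  push_cast; ring

theorem jtheta_eq {τ : ℂ} (hτ : 0 < τ.im) (z : ℂ) :
    jtheta τ z = cexp ((Real.pi : ℂ) * I * τ / 4) *
    (cexp ((Real.pi : ℂ) * I * z) - cexp (-((Real.pi : ℂ) * I * z))) *
    (AP (cexp (2 * (Real.pi : ℂ) * I * τ)) (cexp (2 * (Real.pi : ℂ) * I * z)) *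
      AP (cexp (2 * (Real.pi : ℂ) * I * τ)) (cexp (-(2 * (Real.pi : ℂ) * I * z))) *
      AP (cexp (2 * (Real.pi : ℂ) * I * τ)) 1) := by
  have hq := norm_q_lt hτ
  unfold jtheta AP
  rw [← (AP_mult hq _).tprod_mul (AP_mult hq _),
    ← ((AP_mult hq _).mul (AP_mult hq _)).tprod_mul (AP_mult hq _)]
  simp only [q_pow, mul_one]

theorem eta_eq (τ : ℂ) : dedekindEta τ = cexp ((Real.pi : ℂ) * I * τ / 12) *
    AP (cexp (2 * (Real.pi : ℂ) * I * τ)) 1 := by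
  unfold dedekindEta AP
  simp only [q_pow, mul_one]

theorem eta_ne {τ : ℂ} (hτ : 0 < τ.im) : dedekindEta τ ≠ 0 := by
  rw [eta_eq]
  exact mul_ne_zero (exp_ne_zero _) (AP_one_ne (norm_q_lt hτ))

theorem jtheta_add_one {τ : ℂ} (hτ : 0 < τ.im) (z : ℂ) : jtheta τ (z + 1) = - jtheta τ z := by
  rw [jtheta_eq hτ, jtheta_eq hτ,
    show (Real.pi : ℂ) * I * (z + 1) = Real.pi * I * z + Real.pi * I by ring,
    show 2 * (Real.pi : ℂ) * I * (z + 1) = 2 * Real.pi * I * z + 2 * Real.pi * I by ring]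
  simp only [neg_add, exp_add, exp_neg, exp_pi_mul_I, exp_two_pi_mul_I]
  norm_num
  ring

theorem jtheta_neg {τ : ℂ} (hτ : 0 < τ.im) (z : ℂ) : jtheta τ (-z) = - jtheta τ z := by
  rw [jtheta_eq hτ, jtheta_eq hτ]
  simp only [mul_neg, neg_neg]
  ring

theorem jtheta_add_tau {τ : ℂ} (hτ : 0 < τ.im) (z : ℂ) :
    jtheta τ (z + τ) = - cexp (-(Real.pi * I * (τ + 2 * z))) * jtheta τ z := by
  have hq := norm_q_lt hτ
  have e1 := AP_rec hq (cexp (2 * (Real.pi : ℂ) * I * z))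
  have e2 := AP_rec hq (cexp (-(2 * (Real.pi : ℂ) * I * (z + τ))))
  rw [← exp_add] at e1
  rw [← exp_add] at e2
  rw [show 2 * (Real.pi : ℂ) * I * τ + 2 * Real.pi * I * z = 2 * Real.pi * I * (z + τ) by ring] at e1
  rw [show 2 * (Real.pi : ℂ) * I * τ + -(2 * Real.pi * I * (z + τ)) = -(2 * Real.pi * I * z) by ring]
    at e2
  rw [jtheta_eq hτ, jtheta_eq hτ, e2, e1]
  have h1 : cexp (2 * (Real.pi : ℂ) * I * (z + τ)) =
      cexp (Real.pi * I * z) ^ 2 * cexp (Real.pi * I * τ) ^ 2 := by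
    rw [← exp_nat_mul, ← exp_nat_mul, ← exp_add]; congr 1; push_cast; ring
  have h2 : cexp (-(2 * (Real.pi : ℂ) * I * z)) = (cexp (Real.pi * I * z) ^ 2)⁻¹ := by
    rw [← exp_nat_mul, ← exp_neg]; congr 1; push_cast; ring
  have h3 : cexp (-(Real.pi * I * (τ + 2 * z))) =
      (cexp (Real.pi * I * z) ^ 2)⁻¹ * (cexp (Real.pi * I * τ))⁻¹ := by
    rw [← exp_nat_mul, ← exp_neg, ← exp_neg, ← exp_add]; congr 1; push_cast; ring
  have h4 : cexp (Real.pi * I * (z + τ)) = cexp (Real.pi * I * z) * cexp (Real.pi * I * τ) := by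
    rw [← exp_add]; congr 1; ring
  have h5 : cexp (-(Real.pi * I * (z + τ))) = (cexp (Real.pi * I * z) * cexp (Real.pi * I * τ))⁻¹ := by
    rw [exp_neg, h4]
  have h6 : cexp (-(Real.pi * I * z)) = (cexp (Real.pi * I * z))⁻¹ := exp_neg _
  generalize AP (cexp (2 * (Real.pi : ℂ) * I * τ)) (cexp (2 * (Real.pi : ℂ) * I * (z + τ))) = X
  generalize AP (cexp (2 * (Real.pi : ℂ) * I * τ)) (cexp (-(2 * (Real.pi : ℂ) * I * z))) = Y
  rw [h1, h2, h3, h5, h6, h4]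
  have hu := exp_ne_zero (Real.pi * I * z)
  have hv := exp_ne_zero (Real.pi * I * τ)
  generalize cexp (Real.pi * I * z) = u at *
  generalize cexp (Real.pi * I * τ) = v at *
  field_simp
  ring

/-- The theta quotient. -/
def TH (τ z : ℂ) : ℂ := jtheta τ (2 * z) / dedekindEta τ ^ 3

theorem TH_eq {τ : ℂ} (hτ : 0 < τ.im) (z : ℂ) :
    TH τ z = (cexp (2 * (Real.pi : ℂ) * I * z) - cexp (-(2 * (Real.pi : ℂ) * I * z))) *
    ((AP (cexp (2 * (Real.pi : ℂ) * I * τ)) (cexp (4 * (Real.pi : ℂ) * I * z)) *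
      AP (cexp (2 * (Real.pi : ℂ) * I * τ)) (cexp (-(4 * (Real.pi : ℂ) * I * z)))) /
      AP (cexp (2 * (Real.pi : ℂ) * I * τ)) 1 ^ 2) := by
  unfold TH
  rw [jtheta_eq hτ, eta_eq, mul_pow, ← exp_nat_mul,
    show ((3 : ℕ) : ℂ) * (Real.pi * I * τ / 12) = Real.pi * I * τ / 4 by push_cast; ring,
    show (Real.pi : ℂ) * I * (2 * z) = 2 * Real.pi * I * z by ring,
    show 2 * (Real.pi : ℂ) * I * (2 * z) = 4 * Real.pi * I * z by ring]
  have h1 := AP_one_ne (norm_q_lt hτ)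
  have h2 := exp_ne_zero (Real.pi * I * τ / 4)
  field_simp

theorem TH_diff {τ : ℂ} (hτ : 0 < τ.im) : Differentiable ℂ (TH τ) := by
  have hA := AP_diff (norm_q_lt hτ)
  have : TH τ = _ := funext fun z => TH_eq hτ z
  rw [this]
  have h1 : Differentiable ℂ fun z : ℂ => AP (cexp (2 * (Real.pi : ℂ) * I * τ))
    (cexp (4 * (Real.pi : ℂ) * I * z)) := hA.comp (by fun_prop)
  have h2 : Differentiable ℂ fun z : ℂ => AP (cexp (2 * (Real.pi : ℂ) * I * τ))
    (cexp (-(4 * (Real.pi : ℂ) * I * z))) := hA.comp (by fun_prop)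
  fun_prop

theorem TH_neg {τ : ℂ} (hτ : 0 < τ.im) (z : ℂ) : TH τ (-z) = - TH τ z := by
  unfold TH
  rw [show 2 * -z = -(2 * z) by ring, jtheta_neg hτ, neg_div]

theorem TH_QP {τ : ℂ} (hτ : 0 < τ.im) : QP (2 : ℤ) τ (TH τ) := by
  refine ⟨TH_diff hτ, fun z => ?_, fun z => ?_⟩
  · unfold TH
    rw [show 2 * (z + 1) = 2 * z + 1 + 1 by ring, jtheta_add_one hτ, jtheta_add_one hτ, neg_neg]
  · unfold TH
    rw [show 2 * (z + τ) = 2 * z + τ + τ by ring, jtheta_add_tau hτ, jtheta_add_tau hτ,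
      ← mul_assoc, neg_mul_neg, ← exp_add, mul_div_assoc]
    congr 2
    push_cast; ring

theorem TH_deriv {τ : ℂ} (hτ : 0 < τ.im) : deriv (TH τ) 0 = 4 * Real.pi * I := by
  have hA := AP_diff (norm_q_lt hτ)
  have : TH τ = _ := funext fun z => TH_eq hτ z
  rw [this]
  have h1 : Differentiable ℂ fun z : ℂ => AP (cexp (2 * (Real.pi : ℂ) * I * τ))
    (cexp (4 * (Real.pi : ℂ) * I * z)) := hA.comp (by fun_prop)
  have h2 : Differentiable ℂ fun z : ℂ => AP (cexp (2 * (Real.pi : ℂ) * I * τ))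
    (cexp (-(4 * (Real.pi : ℂ) * I * z))) := hA.comp (by fun_prop)
  have h3 : Differentiable ℂ fun z : ℂ => ((AP (cexp (2 * (Real.pi : ℂ) * I * τ))
      (cexp (4 * (Real.pi : ℂ) * I * z)) *
      AP (cexp (2 * (Real.pi : ℂ) * I * τ)) (cexp (-(4 * (Real.pi : ℂ) * I * z)))) /
      AP (cexp (2 * (Real.pi : ℂ) * I * τ)) 1 ^ 2) := by fun_prop
  have h4 : HasDerivAt (fun z : ℂ => 2 * (Real.pi : ℂ) * I * z) (2 * (Real.pi : ℂ) * I * 1) 0 :=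
    (hasDerivAt_id (0 : ℂ)).const_mul _
  have h5 := (h4.cexp.fun_sub h4.fun_neg.cexp).fun_mul (h3 0).hasDerivAt
  rw [h5.deriv]
  have h6 := AP_one_ne (norm_q_lt hτ)
  simp only [mul_zero, neg_zero, exp_zero, sub_self, zero_mul, add_zero]
  field_simp
  ring

theorem abs_sq_bounds (r : ℝ) : |r| * Real.exp |r| ≤ Real.exp (2 * r) + Real.exp (-(2 * r)) ∧
    r ^ 2 ≤ 2 * (Real.exp (2 * r) + Real.exp (-(2 * r))) ∧
    Real.exp (2 * |r|) ≤ Real.exp (2 * r) + Real.exp (-(2 * r)) := by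
  have h0 : Real.exp (2 * |r|) ≤ Real.exp (2 * r) + Real.exp (-(2 * r)) := by
    rcases abs_cases r with ⟨h, _⟩ | ⟨h, _⟩ <;> rw [h]
    · linarith [Real.exp_pos (-(2 * r))]
    · rw [mul_neg]; linarith [Real.exp_pos (2 * r)]
  have h1 : |r| ≤ Real.exp |r| := by linarith [Real.add_one_le_exp |r|]
  have h2 : Real.exp (2 * |r|) = Real.exp |r| * Real.exp |r| := by
    rw [← Real.exp_add]; congr 1; ring
  refine ⟨?_, ?_, h0⟩
  · refine le_trans ?_ h0
    rw [h2]
    exact mul_le_mul_of_nonneg_right h1 (Real.exp_pos _).le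
  · have h3 : r ^ 2 ≤ Real.exp (2 * |r|) := by
      rw [h2, ← sq_abs, sq]
      exact mul_le_mul h1 h1 (abs_nonneg _) (Real.exp_pos _).le
    linarith [Real.exp_pos (2 * |r|)]

theorem norm_exp_I_mul_le (r : ℝ) (z : ℂ) (a : ℝ) (hz : ‖z‖ ≤ a) :
    ‖cexp (I * r * z)‖ ≤ Real.exp (a * |r|) := by
  rw [norm_exp]
  apply Real.exp_le_exp.mpr
  have h1 : (I * r * z).re ≤ ‖I * r * z‖ := re_le_norm _
  rw [norm_mul, norm_mul, norm_I, one_mul, norm_real, Real.norm_eq_abs] at h1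
  nlinarith [abs_nonneg r]

/-- Termwise second derivative at the origin. -/
theorem hasSum_deriv2 {ι : Type*} (A : ι → ℂ) (r : ι → ℝ) (f : ℂ → ℂ)
    (hs : Summable fun p => ‖A p‖ * (Real.exp (2 * r p) + Real.exp (-(2 * r p))))
    (hf : ∀ z, HasSum (fun p => A p * cexp (I * r p * z)) (f z)) :
    HasSum (fun p => A p * (I * r p) ^ 2) (deriv (deriv f) 0) := by
  have hder : ∀ (p : ι) (B z : ℂ), HasDerivAt (fun z => B * cexp (I * r p * z))
      (B * (I * r p) * cexp (I * r p * z)) z := by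
    intro p B z
    have h1 : HasDerivAt (fun z : ℂ => I * r p * z) (I * r p * 1) z :=
      (hasDerivAt_id z).const_mul _
    convert! h1.cexp.const_mul B using 1
    ring
  have hf' : f = fun z => ∑' p, A p * cexp (I * r p * z) := funext fun z => (hf z).tsum_eq.symm
  have h1 : ∀ z ∈ Metric.ball (0 : ℂ) 2,
      HasSum (fun p => A p * (I * r p) * cexp (I * r p * z)) (deriv f z) := by
    intro z hz
    have := hasSum_deriv_of_summable_norm (F := fun p z => A p * cexp (I * r p * z))
      (U := Metric.ball 0 2) hs (fun p => by fun_prop) Metric.isOpen_ball (by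
        intro p w hw
        rw [mem_ball_zero_iff] at hw
        rw [norm_mul]
        refine mul_le_mul_of_nonneg_left ?_ (norm_nonneg _)
        exact (norm_exp_I_mul_le _ _ _ hw.le).trans (abs_sq_bounds (r p)).2.2) hz
    rw [← hf'] at this
    simpa only [(hder _ _ _).deriv] using this
  have h2 := hasSum_deriv_of_summable_norm (F := fun p z => A p * (I * r p) * cexp (I * r p * z))
      (U := Metric.ball 0 1) (z := 0) hs (fun p => by fun_prop) Metric.isOpen_ball (by
        intro p w hw
        rw [mem_ball_zero_iff] at hw
        rw [norm_mul, norm_mul, mul_assoc]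
        refine mul_le_mul_of_nonneg_left ?_ (norm_nonneg _)
        refine le_trans ?_ (abs_sq_bounds (r p)).1
        have := norm_exp_I_mul_le (r p) w 1 hw.le
        rw [one_mul] at this
        rw [norm_mul, norm_I, one_mul, norm_real, Real.norm_eq_abs]
        exact mul_le_mul_of_nonneg_left this (abs_nonneg _)) (by simp)
  have h3 : (fun w => ∑' p, A p * (I * r p) * cexp (I * r p * w)) =ᶠ[nhds 0] deriv f := by
    filter_upwards [Metric.ball_mem_nhds (0 : ℂ) (by norm_num : (0 : ℝ) < 2)] with z hz
    exact (h1 z hz).tsum_eq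
  rw [h3.deriv_eq] at h2
  simp only [(hder _ _ _).deriv, mul_zero, exp_zero, mul_one] at h2
  convert! h2 using 2 with p
  ring

/-- One-variable form of weak Jacobi forms of index one. -/
structure WJ (k : ℤ) (f : ℂ → ℂ → ℂ) : Prop where
  diff0 : DifferentiableOn ℂ (fun τ => f τ 0) {τ : ℂ | 0 < τ.im}
  qp : ∀ τ : ℂ, 0 < τ.im → QP (1 : ℤ) τ (f τ)
  mod : ∀ a b c d : ℤ, a * d - b * c = 1 → ∀ τ : ℂ, 0 < τ.im → ∀ z : ℂ,
    f ((a * τ + b) / (c * τ + d)) (z / (c * τ + d)) =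
      (c * τ + d) ^ k * cexp (2 * Real.pi * I * c / (c * τ + d) * z ^ 2) * f τ z
  four : ∃ (C : ℕ × (Fin 1 → ℚ) → ℂ) (r : ℕ × (Fin 1 → ℚ) → ℝ), ∀ τ : ℂ, 0 < τ.im → ∀ z : ℂ,
    HasSum (fun p => C p * cexp (2 * Real.pi * I * p.1 * τ) * cexp (I * r p * z)) (f τ z)

theorem pairC_A1 (v w : Fin 1 → ℂ) : pairC A1Gram v w = v 0 * 2 * w 0 := by
  simp [pairC, A1Gram]

theorem WJ_of {k : ℤ} {φ : ℂ → (Fin 1 → ℂ) → ℂ} (h : IsWeakJacobiForm A1Gram k 1 φ) :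
    WJ k (fun τ z => φ τ (fun _ => z)) := by
  obtain ⟨hd, hm, hq, c, -, hc⟩ := h
  have hopen : IsOpen ({τ : ℂ | 0 < τ.im} ×ˢ (Set.univ : Set (Fin 1 → ℂ))) :=
    (isOpen_lt continuous_const continuous_im).prod isOpen_univ
  refine ⟨?_, ?_, ?_, ?_⟩
  · refine hd.comp (f := fun τ : ℂ => (τ, fun _ : Fin 1 => (0 : ℂ))) ?_ ?_
    · fun_prop
    · intro τ hτ; exact ⟨hτ, Set.mem_univ _⟩
  · intro τ hτ
    refine ⟨?_, ?_, ?_⟩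
    · intro z
      have hmem : ((τ, fun _ => z) : ℂ × (Fin 1 → ℂ)) ∈
          {τ : ℂ | 0 < τ.im} ×ˢ (Set.univ : Set (Fin 1 → ℂ)) := ⟨hτ, Set.mem_univ _⟩
      have h1 : DifferentiableAt ℂ (fun p : ℂ × (Fin 1 → ℂ) => φ p.1 p.2) (τ, fun _ => z) :=
        (hd _ hmem).differentiableAt (hopen.mem_nhds hmem)
      exact h1.comp (f := fun z : ℂ => (τ, fun _ : Fin 1 => z)) z (by fun_prop)
    · intro z
      have := hq 0 1 τ hτ (fun _ => z)
      simpa [pairC_A1, zc] using this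
    · intro z
      have := hq 1 0 τ hτ (fun _ => z)
      simp only [pairC_A1, zc, Pi.one_apply, Pi.zero_apply, Int.cast_one, Int.cast_zero, one_mul,
        add_zero, Nat.cast_one] at this
      beta_reduce
      refine Eq.trans ?_ (this.trans ?_)
      · rfl
      congr 2
      push_cast; ring
  · intro a b c d hdet τ hτ z
    have := hm a b c d hdet τ hτ (fun _ => z)
    simp only [pairC_A1] at this
    rw [this]
    congr 3
    push_cast; ring
  · refine ⟨fun p => c p.1 p.2, fun p => 4 * Real.pi * (p.2 0 : ℝ), fun τ hτ z => ?_⟩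
    convert! hc τ hτ (fun _ => z) using 2 with p
    rw [pairC_A1, mul_assoc, ← exp_add]
    congr 2
    simp only [qc]
    push_cast; ring

theorem norm_q_term (n : ℕ) (τ : ℂ) : ‖cexp (2 * Real.pi * I * n * τ)‖ =
    Real.exp (-(2 * Real.pi * n * τ.im)) := by
  rw [norm_exp]
  congr 1
  simp [mul_re, mul_im]

section
variable {k : ℤ} {f : ℂ → ℂ → ℂ}

theorem WJ_summable {C : ℕ × (Fin 1 → ℚ) → ℂ} {r : ℕ × (Fin 1 → ℚ) → ℝ}
    (hC : ∀ τ : ℂ, 0 < τ.im → ∀ z : ℂ,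
      HasSum (fun p => C p * cexp (2 * Real.pi * I * p.1 * τ) * cexp (I * r p * z)) (f τ z))
    (τ : ℂ) (hτ : 0 < τ.im) :
    Summable fun p => ‖C p * cexp (2 * Real.pi * I * p.1 * τ)‖ *
      (Real.exp (2 * r p) + Real.exp (-(2 * r p))) := by
  have h1 := (hC τ hτ (-2 * I)).summable.norm
  have h2 := (hC τ hτ (2 * I)).summable.norm
  refine (h1.add h2).congr ?_
  intro p
  rw [norm_mul _ (cexp _), norm_mul _ (cexp (I * r p * (2 * I))), ← mul_add]
  congr 2
  · rw [norm_exp]; congr 1; simp [mul_re, mul_im]; ring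
  · rw [norm_exp]; congr 1; simp [mul_re, mul_im]; ring

theorem WJ_bound0 (h : WJ k f) : ∃ B : ℝ, ∀ τ : ℂ, 1 ≤ τ.im → ‖f τ 0‖ ≤ B := by
  obtain ⟨C, r, hC⟩ := h.four
  have hs := (hC I (by simp) 0).summable.norm
  refine ⟨∑' p, ‖C p * cexp (2 * Real.pi * I * p.1 * I) * cexp (I * r p * 0)‖, fun τ hτ => ?_⟩
  rw [← (hC τ (by linarith) 0).tsum_eq]
  refine tsum_of_norm_bounded hs.hasSum ?_
  intro p
  simp only [mul_zero, exp_zero, mul_one]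
  rw [norm_mul, norm_mul, norm_q_term, norm_q_term]
  refine mul_le_mul_of_nonneg_left (Real.exp_le_exp.mpr ?_) (norm_nonneg _)
  have : 0 ≤ 2 * Real.pi * p.1 := by positivity
  simp only [I_im]
  nlinarith

theorem WJ_deriv2 (h : WJ k f) :
    DifferentiableOn ℂ (fun τ => deriv (deriv (f τ)) 0) {τ : ℂ | 0 < τ.im} ∧
    ∃ B : ℝ, ∀ τ : ℂ, 1 ≤ τ.im → ‖deriv (deriv (f τ)) 0‖ ≤ B := by
  obtain ⟨C, r, hC⟩ := h.four
  have hD : ∀ τ : ℂ, 0 < τ.im → HasSum (fun p => C p * cexp (2 * Real.pi * I * p.1 * τ) *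
      (I * r p) ^ 2) (deriv (deriv (f τ)) 0) :=
    fun τ hτ => hasSum_deriv2 _ r _ (WJ_summable hC τ hτ) (hC τ hτ)
  have hbd : ∀ (σ τ : ℂ), σ.im ≤ τ.im → ∀ p, ‖C p * cexp (2 * Real.pi * I * p.1 * τ) *
      (I * r p) ^ 2‖ ≤ ‖C p * cexp (2 * Real.pi * I * p.1 * σ)‖ *
      (Real.exp (2 * r p) + Real.exp (-(2 * r p))) * 2 := by
    intro σ τ hστ p
    rw [norm_mul, mul_assoc (‖C p * cexp (2 * Real.pi * I * p.1 * σ)‖)]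
    have e1 : ‖(I * r p : ℂ) ^ 2‖ = r p ^ 2 := by
      rw [norm_pow, norm_mul, norm_I, one_mul, norm_real, Real.norm_eq_abs, sq_abs]
    rw [e1]
    have e2 : ‖C p * cexp (2 * Real.pi * I * p.1 * τ)‖ ≤ ‖C p * cexp (2 * Real.pi * I * p.1 * σ)‖ := by
      rw [norm_mul, norm_mul, norm_q_term, norm_q_term]
      refine mul_le_mul_of_nonneg_left (Real.exp_le_exp.mpr ?_) (norm_nonneg _)
      have : 0 ≤ 2 * Real.pi * p.1 := by positivity
      nlinarith
    refine mul_le_mul e2 ?_ (sq_nonneg _) (norm_nonneg _)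
    linarith [(abs_sq_bounds (r p)).2.1]
  constructor
  · intro τ0 hτ0
    have hτ0' : 0 < τ0.im := hτ0
    have hU : IsOpen {τ : ℂ | τ0.im / 2 < τ.im} := isOpen_lt continuous_const continuous_im
    let σ : ℂ := ((τ0.im / 2 : ℝ) : ℂ) * I
    have hσ : σ.im = τ0.im / 2 := by simp [σ]
    have hdiff := differentiableOn_tsum_of_summable_norm
      (F := fun p τ => C p * cexp (2 * Real.pi * I * (p : ℕ × (Fin 1 → ℚ)).1 * τ) * (I * r p) ^ 2)
      (U := {τ : ℂ | τ0.im / 2 < τ.im})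
      ((WJ_summable hC σ (by rw [hσ]; linarith)).mul_right 2) (fun p => by fun_prop) hU
      (fun p τ hτ => hbd σ τ (by rw [hσ]; exact le_of_lt hτ) p)
    have hmem : τ0 ∈ {τ : ℂ | τ0.im / 2 < τ.im} := by
      change τ0.im / 2 < τ0.im; linarith
    have h1 := (hdiff τ0 hmem).differentiableAt (hU.mem_nhds hmem)
    refine (h1.congr_of_eventuallyEq ?_).differentiableWithinAt
    filter_upwards [hU.mem_nhds hmem] with τ hτ
    have hτ' : τ0.im / 2 < τ.im := hτ
    exact (hD τ (by linarith)).tsum_eq.symm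
  · refine ⟨∑' p, ‖C p * cexp (2 * Real.pi * I * p.1 * I)‖ *
      (Real.exp (2 * r p) + Real.exp (-(2 * r p))) * 2, fun τ hτ => ?_⟩
    rw [← (hD τ (by linarith)).tsum_eq]
    exact tsum_of_norm_bounded ((WJ_summable hC I (by simp)).mul_right 2).hasSum
      (hbd I τ (by simpa using hτ))

theorem denom_ne (a b c d : ℤ) (h : a * d - b * c = 1) (τ : ℂ) (hτ : 0 < τ.im) :
    (c : ℂ) * τ + d ≠ 0 := by
  intro h0
  have him := congrArg Complex.im h0
  simp at him
  have hc : c = 0 := by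
    rcases him with h | h
    · exact_mod_cast h
    · exact absurd h hτ.ne'
  subst hc
  simp at h0
  subst h0
  simp at h

theorem WJ_mod0 (h : WJ k f) (a b c d : ℤ) (hdet : a * d - b * c = 1) (τ : ℂ) (hτ : 0 < τ.im) :
    f ((a * τ + b) / (c * τ + d)) 0 = (c * τ + d) ^ k * f τ 0 := by
  have := h.mod a b c d hdet τ hτ 0
  simpa using this

theorem WJ_mod2 (h : WJ k f) (h0 : ∀ τ : ℂ, 0 < τ.im → f τ 0 = 0)
    (a b c d : ℤ) (hdet : a * d - b * c = 1) (τ : ℂ) (hτ : 0 < τ.im) :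
    deriv (deriv (f ((a * τ + b) / (c * τ + d)))) 0 =
      (c * τ + d) ^ (k + 2) * deriv (deriv (f τ)) 0 := by
  have hne := denom_ne a b c d hdet τ hτ
  set j : ℂ := c * τ + d with hj
  set τ' : ℂ := (a * τ + b) / j with hτ'
  set s : ℂ := 2 * Real.pi * I * c / j with hs
  have hd := (h.qp τ hτ).1
  have hd' : Differentiable ℂ (deriv (f τ)) := (hd.contDiff (n := 2)).differentiable_deriv_two
  have e : ∀ z, f τ' (j⁻¹ * z) = j ^ k * (cexp (s * z ^ 2) * f τ z) := by
    intro z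
    have := h.mod a b c d hdet τ hτ z
    rw [← hj, ← hτ', ← hs] at this
    rw [← mul_assoc, ← this, div_eq_inv_mul]
  have hE : ∀ z : ℂ, HasDerivAt (fun z : ℂ => cexp (s * z ^ 2)) (cexp (s * z ^ 2) * (2 * s * z)) z := by
    intro z
    have h1 : HasDerivAt (fun z : ℂ => s * z ^ 2) (s * (((2 : ℕ) : ℂ) * z ^ (2 - 1))) z :=
      (hasDerivAt_pow 2 z).const_mul s
    convert! h1.cexp using 1
    push_cast; ring
  have d1 : deriv (fun z => f τ' (j⁻¹ * z)) = fun z => j ^ k *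
      (cexp (s * z ^ 2) * (2 * s * z) * f τ z + cexp (s * z ^ 2) * deriv (f τ) z) := by
    ext z
    have : (fun z => f τ' (j⁻¹ * z)) = fun z => j ^ k * (cexp (s * z ^ 2) * f τ z) := funext e
    rw [this]
    exact (((hE z).fun_mul (hd z).hasDerivAt).const_mul _).deriv
  have d2 : deriv (deriv (fun z => f τ' (j⁻¹ * z))) 0 = j ^ k * deriv (deriv (f τ)) 0 := by
    rw [d1]
    have hL : HasDerivAt (fun z : ℂ => 2 * s * z) (2 * s * 1) 0 := (hasDerivAt_id _).const_mul _
    have := (((((hE 0).fun_mul hL).fun_mul (hd 0).hasDerivAt).fun_add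
      ((hE 0).fun_mul (hd' 0).hasDerivAt)).const_mul (j ^ k)).deriv
    rw [this, h0 τ hτ]
    simp
  have d3 : deriv (deriv (fun z => f τ' (j⁻¹ * z))) 0 = j⁻¹ ^ 2 * deriv (deriv (f τ')) 0 := by
    have : deriv (fun z => f τ' (j⁻¹ * z)) = fun z => j⁻¹ * deriv (f τ') (j⁻¹ * z) := by
      ext z
      rw [deriv_comp_mul_left]
      simp
    rw [this, deriv_const_mul_field, deriv_comp_mul_left]
    simp; ring
  rw [d3] at d2
  rw [zpow_add₀ hne]
  have : deriv (deriv (f τ')) 0 = j ^ 2 * (j⁻¹ ^ 2 * deriv (deriv (f τ')) 0) := by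
    field_simp
  rw [this, d2]
  norm_cast
  ring

end

/-- For fixed `τ` the Jacobian is a multiple of the theta quotient. -/
theorem jac_eq {τ : ℂ} (hτ : 0 < τ.im) {f g : ℂ → ℂ} (hf : QP (1 : ℤ) τ f) (hg : QP (1 : ℤ) τ g)
    (hfe : ∀ z, f (-z) = f z) (hge : ∀ z, g (-z) = g z) (z : ℂ) :
    f z * deriv g z - g z * deriv f z =
      (f 0 * deriv (deriv g) 0 - g 0 * deriv (deriv f) 0) / (4 * Real.pi * I) * TH τ z := by
  have h4 : (4 * Real.pi * I : ℂ) ≠ 0 := by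
    simp [Real.pi_ne_zero]
  set K := (f 0 * deriv (deriv g) 0 - g 0 * deriv (deriv f) 0) / (4 * Real.pi * I) with hK
  have hw := hf.wronskian hg
  have hlin := QP.lin hw (TH_QP hτ) 1 K
  have := odd_eq_zero' hlin (TH_QP hτ) (by
      intro z
      simp only [hfe, hge, deriv_odd_of_even hfe, deriv_odd_of_even hge, TH_neg hτ]; ring)
    (TH_neg hτ) (by rw [TH_deriv hτ]; exact h4) (by
      rw [(((hw.1 0).hasDerivAt.const_mul 1).fun_sub ((TH_diff hτ 0).hasDerivAt.const_mul K)).deriv,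
        deriv_wronskian hf.1 hg.1, TH_deriv hτ, hK]
      field_simp
      ring)
  have := congrFun this z
  simp only [Pi.zero_apply] at this
  linear_combination this

/-- For nonzero weak Jacobi forms `φ, ψ` of index 1 and weights `-2`
and `0` in the sense of Eichler–Zagier, the Jacobian `φ·∂ψ/∂z - ψ·∂φ/∂z` is not
identically zero, and equals `c·ϑ(τ,2z)/η(τ)³` for some nonzero constant `c`. -/
theorem jacobian_A1 (φ ψ : ℂ → (Fin 1 → ℂ) → ℂ)
    (hφ : IsWeakJacobiForm A1Gram (-2) 1 φ)
    (hφeven : ∀ τ : ℂ, 0 < τ.im → ∀ z : Fin 1 → ℂ, φ τ (-z) = φ τ z)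
    (hφne : NotIdenticallyZero φ)
    (hψ : IsWeakJacobiForm A1Gram 0 1 ψ)
    (hψeven : ∀ τ : ℂ, 0 < τ.im → ∀ z : Fin 1 → ℂ, ψ τ (-z) = ψ τ z)
    (hψne : NotIdenticallyZero ψ) :
    NotIdenticallyZero (fun τ z => φ τ z * pderiv' 0 ψ τ z - ψ τ z * pderiv' 0 φ τ z) ∧
    ∃ c : ℂ, c ≠ 0 ∧ ∀ τ : ℂ, 0 < τ.im → ∀ z : Fin 1 → ℂ,
      φ τ z * pderiv' 0 ψ τ z - ψ τ z * pderiv' 0 φ τ z =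
        c * jtheta τ (2 * z 0) / dedekindEta τ ^ 3 := by
  have h4 : (4 * Real.pi * I : ℂ) ≠ 0 := by
    simp [Real.pi_ne_zero]
  have hcst : ∀ z : Fin 1 → ℂ, z = fun _ => z 0 := by
    intro z; ext i; rw [Subsingleton.elim i 0]
  have hf := WJ_of hφ
  have hg := WJ_of hψ
  have hfe : ∀ τ : ℂ, 0 < τ.im → ∀ z : ℂ, φ τ (fun _ => -z) = φ τ (fun _ => z) :=
    fun τ hτ z => hφeven τ hτ (fun _ => z)
  have hge : ∀ τ : ℂ, 0 < τ.im → ∀ z : ℂ, ψ τ (fun _ => -z) = ψ τ (fun _ => z) :=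
    fun τ hτ z => hψeven τ hτ (fun _ => z)
  have hpd : ∀ (χ : ℂ → (Fin 1 → ℂ) → ℂ) (τ : ℂ) (z : Fin 1 → ℂ),
      pderiv' 0 χ τ z = deriv (fun w => χ τ (fun _ => w)) (z 0) := by
    intro χ τ z
    unfold pderiv'
    congr 1
    ext w
    congr 1
    ext i
    rw [Subsingleton.elim i 0]
    simp
  -- values at the origin
  have hf0 : ∀ τ : ℂ, 0 < τ.im → φ τ (fun _ => 0) = 0 :=
    mod_neg_two _ hf.diff0 (WJ_bound0 hf) (WJ_mod0 hf)
  obtain ⟨C, hC⟩ := mod_zero _ hg.diff0 (WJ_bound0 hg) (WJ_mod0 hg)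
  obtain ⟨D, hD⟩ := mod_zero _ (WJ_deriv2 hf).1 (WJ_deriv2 hf).2 (WJ_mod2 hf hf0)
  have hC0 : C ≠ 0 := by
    intro h0
    rw [h0] at hC
    have h2 := mod_two _ (WJ_deriv2 hg).1 (WJ_deriv2 hg).2 (WJ_mod2 hg hC)
    obtain ⟨τ, z, hτ, hne⟩ := hψne
    apply hne
    have := even_eq_zero (hg.qp τ hτ) (hge τ hτ) (TH_QP hτ) (TH_neg hτ)
      (by rw [TH_deriv hτ]; exact h4) (hC τ hτ) (h2 τ hτ)
    rw [hcst z]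
    exact congrFun this (z 0)
  have hD0 : D ≠ 0 := by
    intro h0
    rw [h0] at hD
    obtain ⟨τ, z, hτ, hne⟩ := hφne
    apply hne
    have := even_eq_zero (hf.qp τ hτ) (hfe τ hτ) (TH_QP hτ) (TH_neg hτ)
      (by rw [TH_deriv hτ]; exact h4) (hf0 τ hτ) (hD τ hτ)
    rw [hcst z]
    exact congrFun this (z 0)
  have hK : -(C * D) / (4 * Real.pi * I) ≠ 0 :=
    div_ne_zero (neg_ne_zero.mpr (mul_ne_zero hC0 hD0)) h4
  have key : ∀ τ : ℂ, 0 < τ.im → ∀ z : Fin 1 → ℂ,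
      φ τ z * pderiv' 0 ψ τ z - ψ τ z * pderiv' 0 φ τ z =
        -(C * D) / (4 * Real.pi * I) * TH τ (z 0) := by
    intro τ hτ z
    have h1 := jac_eq hτ (hf.qp τ hτ) (hg.qp τ hτ) (hfe τ hτ) (hge τ hτ) (z 0)
    have e1 := hf0 τ hτ
    have e2 := hC τ hτ
    have e3 := hD τ hτ
    beta_reduce at e1 e2 e3 h1
    rw [e1, e2, e3, zero_mul, zero_sub] at h1
    rw [hpd, hpd, ← h1, ← hcst z]
  refine ⟨?_, _, hK, fun τ hτ z => ?_⟩
  · by_contra hcon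
    have hI : 0 < (I : ℂ).im := by simp
    have hz : ∀ z : ℂ, TH I z = 0 := by
      intro z
      by_contra hne
      apply hcon
      refine ⟨I, fun _ => z, hI, ?_⟩
      change φ I _ * _ - _ ≠ 0
      rw [key I hI]
      exact mul_ne_zero hK hne
    have h1 := TH_deriv hI
    rw [show TH I = fun _ => 0 from funext hz, deriv_const] at h1
    exact h4 h1.symm
  · rw [key τ hτ, TH, mul_div_assoc]

end
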